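/- Let 0 < q < 1, let C_1 := q^{1/6} f(-q) f(-q^10)/(f(-q^2) f(-q^5)) and C_2 := q^{1/3} f(-q^2) f(-q^20)/(f(-q^4) f(-q^10)), and set P := C_1·C_2 and Q := C_1/C_2. Then (P + 1/P)(Q^3 + 1/Q^3) + 2 = P^2 + 1/P^2. -/

import Mathlib

open Real

/-- Ramanujan's theta function `φ(q) = ∑_{n=-∞}^∞ q^(n^2)`. -/
noncomputable def phi (q : ℝ) : ℝ := ∑' n : ℤ, q ^ (n ^ 2)

/-- Ramanujan's theta function `ψ(q) = ∑_{n=0}^∞ q^(n(n+1)/2)`. -/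
noncomputable def psi (q : ℝ) : ℝ := ∑' n : ℕ, q ^ (n * (n + 1) / 2)

/-- `fneg q` is Ramanujan's `f(-q) = ∑_{n=-∞}^∞ (-1)^n q^(n(3n-1)/2)`. -/
noncomputable def fneg (q : ℝ) : ℝ := ∑' n : ℤ, (-1 : ℝ) ^ n * q ^ (n * (3 * n - 1) / 2)

/-!
By the Jacobi triple product, the quotients `x = φ(-q) / φ(-q⁵)`, `z = φ(q) / φ(q⁵)` and
`w = ψ(q²) / (q ψ(q¹⁰))` satisfy `x = z (C₁² / C₂)²` and `w = z (C₁ / C₂²)²`.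

Sorting the double series `φ(q)²` and `ψ(q)²` by the classes of `ℤ[i]` modulo `2 + i`, an element
of norm five, and evaluating the resulting products gives
`(φ(-q⁵)² - φ(-q)²) (ψ(q)² - q ψ(q⁵)²) = 4 q φ(-q⁵)² ψ(q⁵)²`, that is
`(1 - x²) (z w - 1) = 4`. Replacing `q` by `-q` exchanges `x` with `z` and changes the sign
of `w`. Eliminating the constants from the two relations leaves a homogeneous cubic in `x, z, w`,
which is the claimed identity between `P = C₁ C₂` and `Q = C₁ / C₂`.
-/

open Filter Topology

lemma norm_pow_lt_one {𝕜 : Type*} [NormedDivisionRing 𝕜] {q : 𝕜} (hq : ‖q‖ < 1) {k : ℕ}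
    (hk : k ≠ 0) : ‖q ^ k‖ < 1 := by
  rw [norm_pow]
  exact pow_lt_one₀ (norm_nonneg q) hq hk

section QPochhammer

variable {𝕜 : Type*} [NormedField 𝕜] {q : 𝕜}

/-- The finite `q`-Pochhammer symbol `(a; q)_n`. -/
def qPochhammer (a q : 𝕜) (n : ℕ) : 𝕜 := ∏ k ∈ Finset.range n, (1 - a * q ^ k)

/-- The infinite `q`-Pochhammer symbol `(a; q)_∞`. -/
noncomputable def qPochhammerInf (a q : 𝕜) : 𝕜 := ∏' k : ℕ, (1 - a * q ^ k)

lemma qPochhammer_succ (a q : 𝕜) (n : ℕ) :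
    qPochhammer a q (n + 1) = qPochhammer a q n * (1 - a * q ^ n) :=
  Finset.prod_range_succ _ _

lemma qPochhammer_succ' (a q : 𝕜) (n : ℕ) :
    qPochhammer a q (n + 1) = (1 - a) * qPochhammer (a * q) q n := by
  simp only [qPochhammer, Finset.prod_range_succ', pow_zero, mul_one, pow_succ', mul_assoc]
  exact mul_comm _ _

lemma qPochhammer_mul_eq_prod (a q : 𝕜) (k n : ℕ) :
    qPochhammer a q (n * k) = ∏ j ∈ Finset.range k, qPochhammer (a * q ^ j) (q ^ k) n := by
  induction n with
  | zero => simp [qPochhammer]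
  | succ n ih =>
    simp only [qPochhammer_succ, Finset.prod_mul_distrib, ← ih]
    rw [qPochhammer, add_mul, one_mul, Finset.prod_range_add]
    refine congrArg _ (Finset.prod_congr rfl fun j _ ↦ ?_)
    rw [← pow_mul, mul_comm k n, mul_assoc, ← pow_add, add_comm j]

lemma one_sub_mul_pow_ne_zero {a : 𝕜} (ha : ‖a‖ < 1) (hq : ‖q‖ < 1) (n : ℕ) :
    1 - a * q ^ n ≠ 0 := by
  have hlt : ‖a * q ^ n‖ < 1 := by
    rw [norm_mul, norm_pow]
    exact mul_lt_one_of_nonneg_of_lt_one_left (norm_nonneg a) ha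
      (pow_le_one₀ (norm_nonneg q) hq.le)
  rintro h
  rw [← sub_eq_zero.1 h, norm_one] at hlt
  exact hlt.false

lemma summable_norm_neg_mul_pow (a : 𝕜) (hq : ‖q‖ < 1) :
    Summable fun n : ℕ ↦ ‖-(a * q ^ n)‖ := by
  simpa only [norm_neg, norm_mul, norm_pow] using
    (summable_geometric_of_lt_one (norm_nonneg q) hq).mul_left ‖a‖

variable [CompleteSpace 𝕜]

lemma multipliable_one_sub_mul_pow (a : 𝕜) (hq : ‖q‖ < 1) :
    Multipliable fun n : ℕ ↦ 1 - a * q ^ n := by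
  simpa only [sub_eq_add_neg] using
    multipliable_one_add_of_summable (summable_norm_neg_mul_pow a hq)

lemma tendsto_qPochhammer (a : 𝕜) (hq : ‖q‖ < 1) :
    Tendsto (qPochhammer a q) atTop (𝓝 (qPochhammerInf a q)) :=
  (multipliable_one_sub_mul_pow a hq).hasProd.tendsto_prod_nat

lemma qPochhammerInf_ne_zero {a : 𝕜} (ha : ‖a‖ < 1) (hq : ‖q‖ < 1) :
    qPochhammerInf a q ≠ 0 := by
  simpa only [qPochhammerInf, sub_eq_add_neg] using
    tprod_one_add_ne_zero_of_summable
      (fun n ↦ by simpa only [sub_eq_add_neg] using one_sub_mul_pow_ne_zero ha hq n)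
      (summable_norm_neg_mul_pow a hq)

lemma qPochhammerInf_eq_one_sub_mul (a : 𝕜) (hq : ‖q‖ < 1) :
    qPochhammerInf a q = (1 - a) * qPochhammerInf (a * q) q :=
  tendsto_nhds_unique ((tendsto_add_atTop_iff_nat 1).2 (tendsto_qPochhammer a hq))
    (((tendsto_qPochhammer (a * q) hq).const_mul (1 - a)).congr fun n ↦
      (qPochhammer_succ' a q n).symm)

lemma qPochhammerInf_eq_prod (a : 𝕜) (hq : ‖q‖ < 1) {k : ℕ} (hk : k ≠ 0) :
    qPochhammerInf a q = ∏ j ∈ Finset.range k, qPochhammerInf (a * q ^ j) (q ^ k) :=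
  tendsto_nhds_unique
    ((tendsto_qPochhammer a hq).comp (tendsto_id.atTop_mul_const' (Nat.pos_of_ne_zero hk)))
    ((tendsto_finsetProd _ fun j _ ↦
      tendsto_qPochhammer (a * q ^ j) (norm_pow_lt_one hq hk)).congr fun n ↦
        (qPochhammer_mul_eq_prod a q k n).symm)

lemma qPochhammerInf_mul_qPochhammerInf_neg (a : 𝕜) (hq : ‖q‖ < 1) :
    qPochhammerInf a q * qPochhammerInf (-a) q = qPochhammerInf (a ^ 2) (q ^ 2) := by
  rw [qPochhammerInf, qPochhammerInf, qPochhammerInf,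
    ← (multipliable_one_sub_mul_pow a hq).tprod_mul (multipliable_one_sub_mul_pow (-a) hq)]
  exact tprod_congr fun n ↦ by ring

lemma qPochhammerInf_self_eq_odd_mul_even (hq : ‖q‖ < 1) :
    qPochhammerInf q q = qPochhammerInf q (q ^ 2) * qPochhammerInf (q ^ 2) (q ^ 2) := by
  rw [qPochhammerInf_eq_prod q hq two_ne_zero, Finset.prod_range_succ, Finset.prod_range_one,
    pow_zero, mul_one, pow_one, ← sq]

end QPochhammer

/-- The triangular number `n (n + 1) / 2` attached to an integer `n`. The division is exact. -/
def triangular (n : ℤ) : ℤ := n * (n + 1) / 2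

lemma two_mul_triangular (n : ℤ) : 2 * triangular n = n * (n + 1) :=
  Int.mul_ediv_cancel' (Int.even_mul_succ_self n).two_dvd

lemma triangular_add_one (n : ℤ) : triangular (n + 1) = triangular n + (n + 1) := by
  linarith [two_mul_triangular n, two_mul_triangular (n + 1)]

lemma triangular_sub_one (n : ℤ) : triangular (n - 1) = triangular n - n := by
  linarith [two_mul_triangular n, two_mul_triangular (n - 1)]

lemma triangular_neg (n : ℤ) : triangular (-n) = triangular (n - 1) := by
  linarith [two_mul_triangular (-n), two_mul_triangular (n - 1)]

section RamanujanTheta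

variable {𝕜 : Type*} [NormedField 𝕜] {a b q : 𝕜}

/-- The general term `a ^ (n (n + 1) / 2) * b ^ (n (n - 1) / 2)` of Ramanujan's theta series. -/
def ramanujanThetaTerm (a b : 𝕜) (n : ℤ) : 𝕜 := a ^ triangular n * b ^ triangular (n - 1)

/-- Ramanujan's general theta function
`f(a, b) = ∑_{n=-∞}^∞ a ^ (n (n + 1) / 2) * b ^ (n (n - 1) / 2)`. -/
noncomputable def ramanujanTheta (a b : 𝕜) : 𝕜 := ∑' n : ℤ, ramanujanThetaTerm a b n

lemma ramanujanThetaTerm_neg (a b : 𝕜) (n : ℤ) :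
    ramanujanThetaTerm a b (-n) = ramanujanThetaTerm b a n := by
  rw [ramanujanThetaTerm, ramanujanThetaTerm, triangular_neg, ← neg_add', triangular_neg,
    add_sub_cancel_right, mul_comm]

lemma ramanujanTheta_comm (a b : 𝕜) : ramanujanTheta a b = ramanujanTheta b a := by
  rw [ramanujanTheta, ← (Equiv.neg ℤ).tsum_eq]
  exact tsum_congr (ramanujanThetaTerm_neg a b)

lemma ramanujanThetaTerm_ne_zero (ha : a ≠ 0) (hb : b ≠ 0) (n : ℤ) :
    ramanujanThetaTerm a b n ≠ 0 :=
  mul_ne_zero (zpow_ne_zero _ ha) (zpow_ne_zero _ hb)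

lemma ramanujanThetaTerm_add_one (ha : a ≠ 0) (hb : b ≠ 0) (n : ℤ) :
    ramanujanThetaTerm a b (n + 1) = a * (a * b) ^ n * ramanujanThetaTerm a b n := by
  rw [ramanujanThetaTerm, ramanujanThetaTerm, triangular_add_one, add_sub_cancel_right,
    triangular_sub_one, zpow_add₀ ha, zpow_add_one₀ ha, zpow_sub₀ hb, mul_zpow]
  field_simp

lemma ramanujanThetaTerm_sub_one (ha : a ≠ 0) (hb : b ≠ 0) (n : ℤ) :
    ramanujanThetaTerm a b (n - 1) = b * (a * b) ^ (-n) * ramanujanThetaTerm a b n := by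
  rw [← ramanujanThetaTerm_neg b a (n - 1), neg_sub', sub_neg_eq_add,
    ramanujanThetaTerm_add_one hb ha, mul_comm b a, ramanujanThetaTerm_neg]

/-- `1 / (q; q)_m`, extended by zero to negative `m` so that its recurrence holds for all `m`. -/
noncomputable def qFactorialInv (q : 𝕜) (m : ℤ) : 𝕜 :=
  if m < 0 then 0 else (qPochhammer q q m.toNat)⁻¹

lemma qFactorialInv_natCast (q : 𝕜) (n : ℕ) : qFactorialInv q n = (qPochhammer q q n)⁻¹ := by
  simp [qFactorialInv]

lemma qFactorialInv_of_neg (q : 𝕜) {m : ℤ} (hm : m < 0) : qFactorialInv q m = 0 :=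
  if_pos hm

lemma qFactorialInv_sub_one (hq : ‖q‖ < 1) (m : ℤ) :
    qFactorialInv q (m - 1) = (1 - q ^ m) * qFactorialInv q m := by
  rcases lt_trichotomy m 0 with hm | rfl | hm
  · rw [qFactorialInv_of_neg q hm, qFactorialInv_of_neg q (by lia : m - 1 < 0), mul_zero]
  · rw [zero_sub, qFactorialInv_of_neg q neg_one_lt_zero, zpow_zero, sub_self, zero_mul]
  · obtain ⟨n, rfl⟩ := Int.le.dest (Int.add_one_le_of_lt hm)
    rw [zero_add]
    have hn : (1 : ℤ) + n = (n + 1 : ℕ) := by push_cast; ring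
    have hfactor := one_sub_mul_pow_ne_zero hq hq n
    rw [add_sub_cancel_left, hn, qFactorialInv_natCast, qFactorialInv_natCast, zpow_natCast,
      qPochhammer_succ, pow_succ']
    field_simp

/-- The central Gaussian binomial coefficient `[2n, n + j]_q`, which vanishes for `n < |j|`. -/
noncomputable def centralGaussBinom (q : 𝕜) (n : ℕ) (j : ℤ) : 𝕜 :=
  qPochhammer q q (2 * n) * qFactorialInv q (n + j) * qFactorialInv q (n - j)

lemma centralGaussBinom_succ (hq0 : q ≠ 0) (hq : ‖q‖ < 1) (n : ℕ) (j : ℤ) :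
    centralGaussBinom q (n + 1) j = (1 + q ^ (2 * n + 1)) * centralGaussBinom q n j +
      q ^ (n + 1 - j) * centralGaussBinom q n (j - 1) +
      q ^ (n + 1 + j) * centralGaussBinom q n (j + 1) := by
  have descend {m m' : ℤ} (h : m' = m - 1) :
      qFactorialInv q m' = (1 - q ^ m) * qFactorialInv q m := h ▸ qFactorialInv_sub_one hq m
  have hu : q ^ (n + 1 + j) = q * q ^ (n + j) := by rw [← zpow_one_add₀ hq0]; ring_nf
  have hv : q ^ (n + 1 - j) = q * q ^ (n - j) := by rw [← zpow_one_add₀ hq0]; ring_nf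
  have huv : q ^ (2 * n) = q ^ (n + j) * q ^ (n - j) := by
    rw [← zpow_add₀ hq0, ← zpow_natCast]; push_cast; ring_nf
  rw [centralGaussBinom, centralGaussBinom, centralGaussBinom, centralGaussBinom,
    descend (by ring : (n : ℤ) + (j - 1) = n + j - 1),
    descend (by ring : (n : ℤ) - (j + 1) = n - j - 1),
    descend (by ring : (n : ℤ) + j = n + 1 + j - 1),
    descend (by ring : (n : ℤ) - j = n + 1 - j - 1),
    show (n : ℤ) - (j - 1) = n + 1 - j by ring, show (n : ℤ) + (j + 1) = n + 1 + j by ring,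
    mul_add_one, qPochhammer_succ, qPochhammer_succ, pow_succ q (2 * n), huv, hu, hv]
  push_cast
  ring

lemma centralGaussBinom_zero (q : 𝕜) (j : ℤ) :
    centralGaussBinom q 0 j = if j = 0 then 1 else 0 := by
  rcases lt_trichotomy j 0 with h | rfl | h
  · simp [centralGaussBinom, qFactorialInv_of_neg q h, h.ne]
  · simp [centralGaussBinom, qFactorialInv, qPochhammer]
  · simp [centralGaussBinom, qFactorialInv_of_neg q (neg_neg_of_pos h), h.ne']

/-- The finite form of the Jacobi triple product. -/
lemma hasSum_centralGaussBinom (ha : a ≠ 0) (hb : b ≠ 0) (hab : ‖a * b‖ < 1) (n : ℕ) :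
    HasSum (fun j : ℤ ↦ centralGaussBinom (a * b) n j * ramanujanThetaTerm a b j)
      (qPochhammer (-a) (a * b) n * qPochhammer (-b) (a * b) n) := by
  have hab0 : a * b ≠ 0 := mul_ne_zero ha hb
  induction n with
  | zero =>
    convert! hasSum_ite_eq (0 : ℤ) (1 : 𝕜) using 2 with j
    · rw [centralGaussBinom_zero]
      split_ifs with h
      · simp [h, ramanujanThetaTerm, triangular]
      · exact zero_mul _
    · simp [qPochhammer]
  | succ n ih =>
    have hleft := ((Equiv.subRight (1 : ℤ)).hasSum_iff.2 ih).mul_left (a * (a * b) ^ n)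
    have hright := ((Equiv.addRight (1 : ℤ)).hasSum_iff.2 ih).mul_left (b * (a * b) ^ n)
    convert! ((ih.mul_left (1 + (a * b) ^ (2 * n + 1))).add hleft).add hright using 1
    · ext j
      simp only [Function.comp, Equiv.subRight_apply, Equiv.coe_addRight]
      rw [centralGaussBinom_succ hab0 hab, ramanujanThetaTerm_sub_one ha hb,
        ramanujanThetaTerm_add_one ha hb, zpow_add₀ hab0 _ j, zpow_sub₀ hab0 _ j,
        zpow_add_one₀ hab0, zpow_natCast, zpow_neg]
      ring
    · rw [qPochhammer_succ, qPochhammer_succ]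
      ring

lemma tendsto_ratio_ramanujanThetaTerm (ha : a ≠ 0) (hb : b ≠ 0) (hab : ‖a * b‖ < 1) :
    Tendsto (fun n : ℕ ↦ ‖ramanujanThetaTerm a b (n + 1)‖ / ‖ramanujanThetaTerm a b n‖)
      atTop (𝓝 0) := by
  have hgeom : Tendsto (fun n : ℕ ↦ ‖a * (a * b) ^ n‖) atTop (𝓝 0) := by
    simpa only [mul_zero, norm_zero] using
      ((tendsto_pow_atTop_nhds_zero_of_norm_lt_one hab).const_mul a).norm
  refine hgeom.congr fun n ↦ ?_
  rw [ramanujanThetaTerm_add_one ha hb, ← norm_div,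
    mul_div_cancel_right₀ _ (ramanujanThetaTerm_ne_zero ha hb n), zpow_natCast]

lemma summable_norm_natCast_ramanujanThetaTerm (ha : a ≠ 0) (hb : b ≠ 0) (hab : ‖a * b‖ < 1) :
    Summable fun n : ℕ ↦ ‖ramanujanThetaTerm a b n‖ :=
  summable_of_ratio_test_tendsto_lt_one one_pos
    (Eventually.of_forall fun n ↦ norm_ne_zero_iff.2 (ramanujanThetaTerm_ne_zero ha hb n))
    (by simpa only [norm_norm, Nat.cast_succ] using tendsto_ratio_ramanujanThetaTerm ha hb hab)

lemma summable_norm_ramanujanThetaTerm (ha : a ≠ 0) (hb : b ≠ 0) (hab : ‖a * b‖ < 1) :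
    Summable fun n : ℤ ↦ ‖ramanujanThetaTerm a b n‖ := by
  refine .of_nat_of_neg (summable_norm_natCast_ramanujanThetaTerm ha hb hab) ?_
  simpa only [ramanujanThetaTerm_neg] using
    summable_norm_natCast_ramanujanThetaTerm hb ha (mul_comm a b ▸ hab)

variable [CompleteSpace 𝕜]

lemma tendsto_qFactorialInv (hq : ‖q‖ < 1) :
    Tendsto (qFactorialInv q) atTop (𝓝 (qPochhammerInf q q)⁻¹) := by
  rw [← Nat.map_cast_int_atTop, tendsto_map'_iff]
  exact ((tendsto_qPochhammer q hq).inv₀ (qPochhammerInf_ne_zero hq hq)).congr fun n ↦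
    (qFactorialInv_natCast q n).symm

lemma tendsto_centralGaussBinom (hq : ‖q‖ < 1) (j : ℤ) :
    Tendsto (fun n ↦ centralGaussBinom q n j) atTop (𝓝 (qPochhammerInf q q)⁻¹) := by
  have hcast : Tendsto (fun n : ℕ ↦ (n : ℤ)) atTop atTop := tendsto_natCast_atTop_atTop
  have hlim := (((tendsto_qPochhammer q hq).comp (tendsto_id.const_mul_atTop' two_pos)).mul
    ((tendsto_qFactorialInv hq).comp (tendsto_atTop_add_const_right _ j hcast))).mul
    ((tendsto_qFactorialInv hq).comp (tendsto_atTop_add_const_right _ (-j) hcast))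
  rwa [mul_inv_cancel₀ (qPochhammerInf_ne_zero hq hq), one_mul] at hlim

lemma exists_norm_qFactorialInv_le (hq : ‖q‖ < 1) : ∃ C, ∀ m, ‖qFactorialInv q m‖ ≤ C := by
  obtain ⟨C, hC⟩ := ((tendsto_qPochhammer q hq).inv₀
    (qPochhammerInf_ne_zero hq hq)).norm.bddAbove_range
  refine ⟨C, fun m ↦ ?_⟩
  rw [qFactorialInv]
  split_ifs
  · exact norm_zero.trans_le ((norm_nonneg _).trans (hC ⟨0, rfl⟩))
  · exact hC ⟨m.toNat, rfl⟩

lemma exists_norm_centralGaussBinom_le (hq : ‖q‖ < 1) :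
    ∃ C, ∀ n j, ‖centralGaussBinom q n j‖ ≤ C := by
  obtain ⟨M, hM⟩ := (tendsto_qPochhammer q hq).norm.bddAbove_range
  obtain ⟨N, hN⟩ := exists_norm_qFactorialInv_le hq
  have hM0 : 0 ≤ M := (norm_nonneg _).trans (hM ⟨0, rfl⟩)
  have hN0 : 0 ≤ N := (norm_nonneg _).trans (hN 0)
  refine ⟨M * N * N, fun n j ↦ ?_⟩
  rw [centralGaussBinom, norm_mul, norm_mul]
  gcongr
  exacts [hM ⟨2 * n, rfl⟩, hN _, hN _]

/-- The **Jacobi triple product identity**. -/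
theorem ramanujanTheta_eq_qPochhammerInf (ha : a ≠ 0) (hb : b ≠ 0) (hab : ‖a * b‖ < 1) :
    ramanujanTheta a b = qPochhammerInf (-a) (a * b) * qPochhammerInf (-b) (a * b) *
      qPochhammerInf (a * b) (a * b) := by
  obtain ⟨C, hC⟩ := exists_norm_centralGaussBinom_le hab
  have hsum : Tendsto (fun n ↦ ∑' j, centralGaussBinom (a * b) n j * ramanujanThetaTerm a b j)
      atTop (𝓝 (∑' j, (qPochhammerInf (a * b) (a * b))⁻¹ * ramanujanThetaTerm a b j)) := by
    refine tendsto_tsum_of_dominated_convergence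
      ((summable_norm_ramanujanThetaTerm ha hb hab).mul_left C)
      (fun j ↦ (tendsto_centralGaussBinom hab j).mul_const _) (.of_forall fun n j ↦ ?_)
    rw [norm_mul]
    gcongr
    exact hC n j
  simp only [(hasSum_centralGaussBinom ha hb hab _).tsum_eq] at hsum
  have hprod := (tendsto_qPochhammer (-a) hab).mul (tendsto_qPochhammer (-b) hab)
  rw [tendsto_nhds_unique hprod hsum, tsum_mul_left, ramanujanTheta, mul_comm,
    mul_inv_cancel_left₀ (qPochhammerInf_ne_zero hab hab)]

end RamanujanTheta

section SquareDissection

/-- The bijection `(i, s, t) ↦ (2s - t, s + 2t) + r i` expressing that the `r i` represent the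
cosets of the ideal `(2 + i)` in the Gaussian integers, of index five. -/
def gaussianCosetEquiv (r : Fin 5 → ℤ × ℤ) (hr : ∀ i, ((r i).1 - 2 * (r i).2) % 5 = (i : ℕ)) :
    Fin 5 × (ℤ × ℤ) ≃ ℤ × ℤ where
  toFun p := (2 * p.2.1 - p.2.2 + (r p.1).1, p.2.1 + 2 * p.2.2 + (r p.1).2)
  invFun p :=
    let i : Fin 5 := ⟨((p.1 - 2 * p.2) % 5).toNat, by lia⟩
    (i, (2 * (p.1 - (r i).1) + (p.2 - (r i).2)) / 5, (2 * (p.2 - (r i).2) - (p.1 - (r i).1)) / 5)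
  left_inv := by
    rintro ⟨i, s, t⟩
    have hi : (2 * s - t + (r i).1 - 2 * (s + 2 * t + (r i).2)) % 5 = (i : ℕ) := by
      have := hr i
      lia
    simp only [hi, Int.toNat_natCast, Fin.eta, Prod.mk.injEq, true_and]
    lia
  right_inv := by
    rintro ⟨m, n⟩
    have hi := hr ⟨((m - 2 * n) % 5).toNat, by lia⟩
    simp only [Prod.mk.injEq]
    simp only at hi
    lia

lemma tsum_eq_sum_tsum_gaussian_coset {E : Type*} [NormedAddCommGroup E] [CompleteSpace E]
    {g : ℤ × ℤ → E} (hg : Summable g) (r : Fin 5 → ℤ × ℤ)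
    (hr : ∀ i, ((r i).1 - 2 * (r i).2) % 5 = (i : ℕ)) :
    ∑' p, g p = ∑ i, ∑' p : ℤ × ℤ, g (2 * p.1 - p.2 + (r i).1, p.1 + 2 * p.2 + (r i).2) := by
  rw [← (gaussianCosetEquiv r hr).tsum_eq g, ← tsum_fintype (L := .unconditional _)]
  exact ((gaussianCosetEquiv r hr).summable_iff.2 hg).tsum_prod

variable {𝕜 : Type*} [NormedField 𝕜] {a b : 𝕜}

/-- The closed form of the part of `f(a, b) ^ 2`, seen as a double series over `ℤ[i]`, carried by
the coset of `j + k i` modulo `(2 + i)`. -/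
noncomputable def ramanujanThetaSqCoset (a b : 𝕜) (j k : ℤ) : 𝕜 :=
  ramanujanThetaTerm a b j * ramanujanThetaTerm a b k *
    (ramanujanTheta (a ^ (4 + 2 * j + k) * b ^ (1 + 2 * j + k))
        (a ^ (1 - 2 * j - k) * b ^ (4 - 2 * j - k)) *
      ramanujanTheta (a ^ (3 - j + 2 * k) * b ^ (2 - j + 2 * k))
        (a ^ (2 + j - 2 * k) * b ^ (3 + j - 2 * k)))

-- On `m + ni = (2 + i) (s + ti) + j + ki` the leading form `m² + n²` of the exponents becomes
-- `5 (s² + t²)`, so the variables `s` and `t` separate.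
lemma ramanujanThetaTerm_mul_coset (ha : a ≠ 0) (hb : b ≠ 0) (j k s t : ℤ) :
    ramanujanThetaTerm a b (2 * s - t + j) * ramanujanThetaTerm a b (s + 2 * t + k) =
      ramanujanThetaTerm a b j * ramanujanThetaTerm a b k *
        (ramanujanThetaTerm (a ^ (4 + 2 * j + k) * b ^ (1 + 2 * j + k))
            (a ^ (1 - 2 * j - k) * b ^ (4 - 2 * j - k)) s *
          ramanujanThetaTerm (a ^ (3 - j + 2 * k) * b ^ (2 - j + 2 * k))
            (a ^ (2 + j - 2 * k) * b ^ (3 + j - 2 * k)) t) := by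
  have exponent_a : triangular (2 * s - t + j) + triangular (s + 2 * t + k) =
      triangular j + triangular k +
        ((4 + 2 * j + k) * triangular s + (1 - 2 * j - k) * triangular (s - 1)) +
        ((3 - j + 2 * k) * triangular t + (2 + j - 2 * k) * triangular (t - 1)) := by
    refine mul_left_cancel₀ (two_ne_zero (α := ℤ)) ?_
    rw [triangular_sub_one, triangular_sub_one]
    linear_combination two_mul_triangular (2 * s - t + j) + two_mul_triangular (s + 2 * t + k) -
      two_mul_triangular j - two_mul_triangular k - 5 * two_mul_triangular s -
      5 * two_mul_triangular t
  have exponent_b : triangular (2 * s - t + j - 1) + triangular (s + 2 * t + k - 1) =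
      triangular (j - 1) + triangular (k - 1) +
        ((1 + 2 * j + k) * triangular s + (4 - 2 * j - k) * triangular (s - 1)) +
        ((2 - j + 2 * k) * triangular t + (3 + j - 2 * k) * triangular (t - 1)) := by
    simp only [triangular_sub_one] at exponent_a ⊢
    linear_combination exponent_a
  have hpow_a := congrArg (a ^ ·) exponent_a
  have hpow_b := congrArg (b ^ ·) exponent_b
  simp only [zpow_add₀ ha (_ * triangular _), zpow_add₀ ha (_ + _ : ℤ) (_ + _ : ℤ),
    zpow_add₀ ha (triangular _), zpow_mul] at hpow_a
  simp only [zpow_add₀ hb (_ * triangular _), zpow_add₀ hb (_ + _ : ℤ) (_ + _ : ℤ),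
    zpow_add₀ hb (triangular _), zpow_mul] at hpow_b
  simp only [ramanujanThetaTerm, mul_zpow]
  rw [mul_mul_mul_comm, hpow_a, hpow_b]
  ring

lemma norm_zpow_mul_zpow_mul_lt_one (ha : a ≠ 0) (hb : b ≠ 0) (hab : ‖a * b‖ < 1) {k l m n : ℤ}
    (ha5 : k + m = 5) (hb5 : l + n = 5) : ‖a ^ k * b ^ l * (a ^ m * b ^ n)‖ < 1 := by
  have hpow : a ^ k * b ^ l * (a ^ m * b ^ n) = (a * b) ^ 5 := by
    rw [mul_mul_mul_comm, ← zpow_add₀ ha, ← zpow_add₀ hb, ha5, hb5, ← mul_zpow, zpow_ofNat]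
  exact hpow ▸ norm_pow_lt_one hab (by norm_num)

variable [CompleteSpace 𝕜]

lemma tsum_ramanujanThetaTerm_mul_coset (ha : a ≠ 0) (hb : b ≠ 0) (hab : ‖a * b‖ < 1) (j k : ℤ) :
    ∑' p : ℤ × ℤ, ramanujanThetaTerm a b (2 * p.1 - p.2 + j) *
      ramanujanThetaTerm a b (p.1 + 2 * p.2 + k) = ramanujanThetaSqCoset a b j k := by
  have hne (m n : ℤ) : a ^ m * b ^ n ≠ 0 := mul_ne_zero (zpow_ne_zero _ ha) (zpow_ne_zero _ hb)
  have hsum {k l m n : ℤ} (ha5 : k + m = 5) (hb5 : l + n = 5) :=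
    summable_norm_ramanujanThetaTerm (hne k l) (hne m n)
      (norm_zpow_mul_zpow_mul_lt_one ha hb hab ha5 hb5)
  rw [ramanujanThetaSqCoset, ramanujanTheta, ramanujanTheta,
    tsum_mul_tsum_of_summable_norm (hsum (by ring) (by ring)) (hsum (by ring) (by ring)),
    ← tsum_mul_left]
  exact tsum_congr fun p ↦ ramanujanThetaTerm_mul_coset ha hb j k p.1 p.2

theorem ramanujanTheta_sq_eq_sum (ha : a ≠ 0) (hb : b ≠ 0) (hab : ‖a * b‖ < 1)
    (r : Fin 5 → ℤ × ℤ) (hr : ∀ i, ((r i).1 - 2 * (r i).2) % 5 = (i : ℕ)) :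
    ramanujanTheta a b ^ 2 = ∑ i, ramanujanThetaSqCoset a b (r i).1 (r i).2 := by
  have hsum := summable_norm_ramanujanThetaTerm ha hb hab
  have hprod := summable_mul_of_summable_norm hsum hsum
  rw [sq, ramanujanTheta, tsum_mul_tsum_of_summable_norm hsum hsum,
    tsum_eq_sum_tsum_gaussian_coset hprod r hr]
  exact Finset.sum_congr rfl fun i _ ↦ tsum_ramanujanThetaTerm_mul_coset ha hb hab _ _

end SquareDissection

section Dissections

variable {q : ℝ}

lemma phi_eq_ramanujanTheta (hq0 : q ≠ 0) : phi q = ramanujanTheta q q := by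
  refine tsum_congr fun n ↦ ?_
  rw [ramanujanThetaTerm, ← zpow_add₀ hq0, triangular_sub_one]
  congr 1
  linear_combination -two_mul_triangular n

lemma two_mul_psi_eq_ramanujanTheta (hq0 : q ≠ 0) (hq : ‖q‖ < 1) :
    2 * psi q = ramanujanTheta q 1 := by
  have hterm (n : ℕ) : ramanujanThetaTerm q 1 n = q ^ (n * (n + 1) / 2) := by
    rw [ramanujanThetaTerm, one_zpow, mul_one, triangular]
    exact_mod_cast zpow_natCast q _
  have hterm_neg (n : ℕ) : ramanujanThetaTerm q 1 (-(n + 1)) = q ^ (n * (n + 1) / 2) := by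
    rw [← hterm, ramanujanThetaTerm, triangular_neg, add_sub_cancel_right, one_zpow,
      ramanujanThetaTerm, one_zpow]
  have hsum : Summable fun n : ℕ ↦ ramanujanThetaTerm q 1 n :=
    (summable_norm_natCast_ramanujanThetaTerm hq0 one_ne_zero (by rwa [mul_one])).of_norm
  rw [ramanujanTheta, tsum_of_nat_of_neg_add_one hsum (by simpa only [hterm_neg, hterm] using hsum)]
  simp only [hterm, hterm_neg, ← two_mul, psi]

lemma phi_sq_sub_phi_pow_five_sq (hq0 : q ≠ 0) (hq : ‖q‖ < 1) :
    phi q ^ 2 - phi (q ^ 5) ^ 2 =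
      4 * q * (ramanujanTheta q (q ^ 9) * ramanujanTheta (q ^ 3) (q ^ 7)) := by
  have hqq : ‖q * q‖ < 1 := by
    rw [← sq]
    exact norm_pow_lt_one hq two_ne_zero
  rw [sub_eq_iff_eq_add', phi_eq_ramanujanTheta hq0, phi_eq_ramanujanTheta (pow_ne_zero 5 hq0),
    ramanujanTheta_sq_eq_sum hq0 hq0 hqq ![(0, 0), (1, 0), (0, -1), (0, 1), (-1, 0)] (by decide)]
  simp only [Fin.sum_univ_five, Matrix.cons_val, ramanujanThetaSqCoset, ramanujanThetaTerm,
    triangular, ← zpow_add₀ hq0]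
  norm_num [zpow_ofNat, ramanujanTheta_comm (q ^ 9), ramanujanTheta_comm (q ^ 7)]
  ring

lemma psi_sq_sub_mul_psi_pow_five_sq (hq0 : q ≠ 0) (hq : ‖q‖ < 1) :
    psi q ^ 2 - q * psi (q ^ 5) ^ 2 =
      ramanujanTheta q (q ^ 4) * ramanujanTheta (q ^ 2) (q ^ 3) := by
  have hsq : ramanujanTheta q 1 ^ 2 = 4 * (ramanujanTheta q (q ^ 4) *
      ramanujanTheta (q ^ 2) (q ^ 3)) + q * ramanujanTheta (q ^ 5) 1 ^ 2 := by
    rw [ramanujanTheta_sq_eq_sum hq0 one_ne_zero (by rwa [mul_one])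
      ![(0, 0), (-1, -1), (0, -1), (0, 1), (-1, 0)] (by decide)]
    simp only [Fin.sum_univ_five, Matrix.cons_val, ramanujanThetaSqCoset, ramanujanThetaTerm,
      triangular, one_zpow, mul_one]
    norm_num [zpow_ofNat, ramanujanTheta_comm (q ^ 4), ramanujanTheta_comm (q ^ 3)]
    ring
  rw [← two_mul_psi_eq_ramanujanTheta hq0 hq,
    ← two_mul_psi_eq_ramanujanTheta (pow_ne_zero 5 hq0) (norm_pow_lt_one hq (by norm_num))] at hsq
  linear_combination hsq / 4

end Dissections

section EtaQuotients

section General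

variable {𝕜 : Type*} [NormedField 𝕜] [CompleteSpace 𝕜] {q : 𝕜}

lemma ramanujanTheta_mul_ramanujanTheta_five (hq0 : q ≠ 0) (hq : ‖q‖ < 1) :
    ramanujanTheta q (q ^ 4) * ramanujanTheta (q ^ 2) (q ^ 3) *
        (qPochhammerInf q q * qPochhammerInf (q ^ 10) (q ^ 10)) =
      qPochhammerInf (q ^ 2) (q ^ 2) * qPochhammerInf (q ^ 5) (q ^ 5) ^ 3 := by
  have hq5 : ‖q ^ 5‖ < 1 := norm_pow_lt_one hq (by norm_num)
  have hclasses : qPochhammerInf (-q) q = qPochhammerInf (-q) (q ^ 5) *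
      qPochhammerInf (-q ^ 2) (q ^ 5) * qPochhammerInf (-q ^ 3) (q ^ 5) *
      qPochhammerInf (-q ^ 4) (q ^ 5) * qPochhammerInf (-q ^ 5) (q ^ 5) := by
    rw [qPochhammerInf_eq_prod (-q) hq (k := 5) (by norm_num)]
    simp only [Finset.prod_range_succ, Finset.prod_range_zero]
    ring_nf
  have heven := qPochhammerInf_mul_qPochhammerInf_neg (q ^ 5) hq5
  rw [ramanujanTheta_eq_qPochhammerInf hq0 (pow_ne_zero 4 hq0) (by rwa [← pow_succ']),
    ramanujanTheta_eq_qPochhammerInf (pow_ne_zero 2 hq0) (pow_ne_zero 3 hq0) (by rwa [← pow_add]),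
    ← pow_succ', ← pow_add, ← qPochhammerInf_mul_qPochhammerInf_neg q hq, hclasses]
  rw [← pow_mul] at heven
  rw [← heven]
  ring

lemma ramanujanTheta_mul_ramanujanTheta_ten (hq0 : q ≠ 0) (hq : ‖q‖ < 1) :
    ramanujanTheta (-q) (-q ^ 9) * ramanujanTheta (-q ^ 3) (-q ^ 7) *
        (qPochhammerInf (q ^ 2) (q ^ 2) * qPochhammerInf (q ^ 5) (q ^ 5)) =
      qPochhammerInf q q * qPochhammerInf (q ^ 10) (q ^ 10) ^ 3 := by
  have hq5 : ‖q ^ 5‖ < 1 := norm_pow_lt_one hq (by norm_num)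
  have hq10 : ‖q ^ 10‖ < 1 := norm_pow_lt_one hq (by norm_num)
  have hclasses : qPochhammerInf q (q ^ 2) = qPochhammerInf q (q ^ 10) *
      qPochhammerInf (q ^ 3) (q ^ 10) * qPochhammerInf (q ^ 5) (q ^ 10) *
      qPochhammerInf (q ^ 7) (q ^ 10) * qPochhammerInf (q ^ 9) (q ^ 10) := by
    rw [qPochhammerInf_eq_prod q (norm_pow_lt_one hq two_ne_zero) (k := 5) (by norm_num)]
    simp only [Finset.prod_range_succ, Finset.prod_range_zero]
    ring_nf
  have hodd := qPochhammerInf_self_eq_odd_mul_even hq5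
  rw [← pow_mul] at hodd
  have h₁₉ : -q * -q ^ 9 = q ^ 10 := by ring
  have h₃₇ : -q ^ 3 * -q ^ 7 = q ^ 10 := by ring
  have hne (k : ℕ) : -q ^ k ≠ 0 := neg_ne_zero.2 (pow_ne_zero k hq0)
  rw [ramanujanTheta_eq_qPochhammerInf (neg_ne_zero.2 hq0) (hne 9) (h₁₉ ▸ hq10),
    ramanujanTheta_eq_qPochhammerInf (hne 3) (hne 7) (h₃₇ ▸ hq10), h₁₉, h₃₇, hodd,
    qPochhammerInf_self_eq_odd_mul_even hq, hclasses]
  simp only [neg_neg]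
  ring

end General

variable {q : ℝ}

lemma fneg_eq_ramanujanTheta (hq0 : q ≠ 0) : fneg q = ramanujanTheta (-q) (-q ^ 2) := by
  refine tsum_congr fun n ↦ ?_
  have hexp : n * (3 * n - 1) / 2 = triangular n + 2 * triangular (n - 1) := by
    refine Int.ediv_eq_of_eq_mul_right two_ne_zero ?_
    rw [triangular_sub_one]
    linear_combination -3 * two_mul_triangular n
  have hparity : n + 2 * triangular (n - 1) = triangular n + triangular (n - 1) := by
    rw [triangular_sub_one]
    ring
  have hsign : (-1 : ℝ) ^ n = (-1) ^ triangular n * (-1) ^ triangular (n - 1) := by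
    rw [← zpow_add₀ (by norm_num), ← hparity, zpow_add₀ (by norm_num), zpow_mul]
    norm_num
  rw [ramanujanThetaTerm, hexp, hsign, neg_eq_neg_one_mul q, neg_eq_neg_one_mul (q ^ 2),
    mul_zpow, mul_zpow, zpow_add₀ hq0, zpow_mul, zpow_ofNat]
  ring

lemma fneg_eq_qPochhammerInf (hq0 : q ≠ 0) (hq : ‖q‖ < 1) : fneg q = qPochhammerInf q q := by
  have hq3 : -q * -q ^ 2 = q ^ 3 := by ring
  rw [fneg_eq_ramanujanTheta hq0, ramanujanTheta_eq_qPochhammerInf (neg_ne_zero.2 hq0)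
    (neg_ne_zero.2 (pow_ne_zero 2 hq0)) (hq3 ▸ norm_pow_lt_one hq three_ne_zero), hq3,
    qPochhammerInf_eq_prod q hq three_ne_zero]
  simp only [Finset.prod_range_succ, Finset.prod_range_zero]
  ring_nf

lemma fneg_ne_zero (hq0 : q ≠ 0) (hq : ‖q‖ < 1) : fneg q ≠ 0 := by
  rw [fneg_eq_qPochhammerInf hq0 hq]
  exact qPochhammerInf_ne_zero hq hq

lemma fneg_pow_eq_qPochhammerInf (hq0 : q ≠ 0) (hq : ‖q‖ < 1) {k : ℕ} (hk : k ≠ 0) :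
    fneg (q ^ k) = qPochhammerInf (q ^ k) (q ^ k) :=
  fneg_eq_qPochhammerInf (pow_ne_zero k hq0) (norm_pow_lt_one hq hk)

lemma fneg_pow_ne_zero (hq0 : q ≠ 0) (hq : ‖q‖ < 1) {k : ℕ} (hk : k ≠ 0) : fneg (q ^ k) ≠ 0 :=
  fneg_ne_zero (pow_ne_zero k hq0) (norm_pow_lt_one hq hk)

lemma phi_eq_qPochhammerInf (hq0 : q ≠ 0) (hq : ‖q‖ < 1) :
    phi q = qPochhammerInf (-q) (q ^ 2) ^ 2 * qPochhammerInf (q ^ 2) (q ^ 2) := by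
  have hq2 := norm_pow_lt_one hq two_ne_zero
  rw [sq] at hq2
  rw [phi_eq_ramanujanTheta hq0, ramanujanTheta_eq_qPochhammerInf hq0 hq0 hq2, ← sq, ← sq]

lemma phi_neg_eq_fneg (hq0 : q ≠ 0) (hq : ‖q‖ < 1) : phi (-q) = fneg q ^ 2 / fneg (q ^ 2) := by
  rw [eq_div_iff (fneg_pow_ne_zero hq0 hq two_ne_zero),
    phi_eq_qPochhammerInf (neg_ne_zero.2 hq0) (by rwa [norm_neg]), neg_neg, neg_sq,
    fneg_pow_eq_qPochhammerInf hq0 hq two_ne_zero, fneg_eq_qPochhammerInf hq0 hq,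
    qPochhammerInf_self_eq_odd_mul_even hq]
  ring

lemma phi_eq_fneg (hq0 : q ≠ 0) (hq : ‖q‖ < 1) :
    phi q = fneg (q ^ 2) ^ 5 / (fneg q ^ 2 * fneg (q ^ 4) ^ 2) := by
  have hq2 := norm_pow_lt_one hq two_ne_zero
  have hpm := qPochhammerInf_mul_qPochhammerInf_neg q hq2
  have hodd := qPochhammerInf_self_eq_odd_mul_even hq2
  simp only [← pow_mul, Nat.reduceMul] at hpm hodd
  rw [eq_div_iff (mul_ne_zero (pow_ne_zero 2 (fneg_ne_zero hq0 hq))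
      (pow_ne_zero 2 (fneg_pow_ne_zero hq0 hq four_ne_zero))), phi_eq_qPochhammerInf hq0 hq,
    fneg_eq_qPochhammerInf hq0 hq, fneg_pow_eq_qPochhammerInf hq0 hq two_ne_zero,
    fneg_pow_eq_qPochhammerInf hq0 hq four_ne_zero, qPochhammerInf_self_eq_odd_mul_even hq, hodd,
    ← hpm]
  ring

lemma psi_eq_fneg (hq0 : q ≠ 0) (hq : ‖q‖ < 1) : psi q = fneg (q ^ 2) ^ 2 / fneg q := by
  have htheta : 2 * psi q = 2 * qPochhammerInf (-q) q ^ 2 * qPochhammerInf q q := by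
    rw [two_mul_psi_eq_ramanujanTheta hq0 hq, ramanujanTheta_eq_qPochhammerInf hq0 one_ne_zero
      (by rwa [mul_one]), mul_one, qPochhammerInf_eq_one_sub_mul (-1) hq, neg_one_mul]
    ring
  rw [eq_div_iff (fneg_ne_zero hq0 hq), fneg_eq_qPochhammerInf hq0 hq,
    fneg_pow_eq_qPochhammerInf hq0 hq two_ne_zero, ← qPochhammerInf_mul_qPochhammerInf_neg q hq]
  linear_combination qPochhammerInf q q / 2 * htheta

lemma phi_ne_zero (hq0 : q ≠ 0) (hq : ‖q‖ < 1) : phi q ≠ 0 := by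
  rw [phi_eq_fneg hq0 hq]
  exact div_ne_zero (pow_ne_zero 5 (fneg_pow_ne_zero hq0 hq two_ne_zero))
    (mul_ne_zero (pow_ne_zero 2 (fneg_ne_zero hq0 hq))
      (pow_ne_zero 2 (fneg_pow_ne_zero hq0 hq four_ne_zero)))

lemma psi_ne_zero (hq0 : q ≠ 0) (hq : ‖q‖ < 1) : psi q ≠ 0 := by
  rw [psi_eq_fneg hq0 hq]
  exact div_ne_zero (pow_ne_zero 2 (fneg_pow_ne_zero hq0 hq two_ne_zero)) (fneg_ne_zero hq0 hq)

lemma psi_sq (hq0 : q ≠ 0) (hq : ‖q‖ < 1) : psi q ^ 2 = phi q * psi (q ^ 2) := by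
  have h₁ := fneg_ne_zero hq0 hq
  have h₂ := fneg_pow_ne_zero hq0 hq two_ne_zero
  have h₄ := fneg_pow_ne_zero hq0 hq four_ne_zero
  rw [psi_eq_fneg hq0 hq, phi_eq_fneg hq0 hq,
    psi_eq_fneg (pow_ne_zero 2 hq0) (norm_pow_lt_one hq two_ne_zero), ← pow_mul]
  field_simp

lemma phi_psi_degree_five (hq0 : q ≠ 0) (hq : ‖q‖ < 1) :
    (phi (-q ^ 5) ^ 2 - phi (-q) ^ 2) * (psi q ^ 2 - q * psi (q ^ 5) ^ 2) =
      4 * q * (phi (-q ^ 5) ^ 2 * psi (q ^ 5) ^ 2) := by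
  have hq5 := norm_pow_lt_one hq (k := 5) (by norm_num)
  have h₁ := fneg_ne_zero hq0 hq
  have h₂ := fneg_pow_ne_zero hq0 hq two_ne_zero
  have h₅ := fneg_pow_ne_zero hq0 hq (k := 5) (by norm_num)
  have h₁₀ := fneg_pow_ne_zero hq0 hq (k := 10) (by norm_num)
  have hfive := ramanujanTheta_mul_ramanujanTheta_five hq0 hq
  have hten := ramanujanTheta_mul_ramanujanTheta_ten hq0 hq
  simp only [← fneg_eq_qPochhammerInf hq0 hq, ← fneg_pow_eq_qPochhammerInf hq0 hq two_ne_zero,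
    ← fneg_pow_eq_qPochhammerInf hq0 hq (k := 5) (by norm_num),
    ← fneg_pow_eq_qPochhammerInf hq0 hq (k := 10) (by norm_num)] at hfive hten
  have hphi := phi_sq_sub_phi_pow_five_sq (neg_ne_zero.2 hq0) (by rwa [norm_neg])
  rw [Odd.neg_pow (by decide), Odd.neg_pow (by decide), Odd.neg_pow (by decide),
    Odd.neg_pow (by decide), eq_div_of_mul_eq (mul_ne_zero h₂ h₅) hten] at hphi
  rw [psi_sq_sub_mul_psi_pow_five_sq hq0 hq, eq_div_of_mul_eq (mul_ne_zero h₁ h₁₀) hfive,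
    ← neg_sub, hphi, phi_neg_eq_fneg (pow_ne_zero 5 hq0) hq5, psi_eq_fneg (pow_ne_zero 5 hq0) hq5,
    ← pow_mul]
  field_simp

end EtaQuotients

section ModularEquation

variable {q : ℝ}

/-- The degree-five quotient `φ(q) / φ(q ^ 5)`. -/
noncomputable def phiQuotient (q : ℝ) : ℝ := phi q / phi (q ^ 5)

/-- The degree-five quotient `ψ(q ^ 2) / (q ψ(q ^ 10))`, normalized so as to be odd in `q`. -/
noncomputable def psiQuotient (q : ℝ) : ℝ := psi (q ^ 2) / (q * psi (q ^ 10))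

/-- The quotient `f(-q) f(-q ^ 10) / (f(-q ^ 2) f(-q ^ 5))`, so that
`C_n = q ^ (n / 6) * levelTenQuotient (q ^ n)`. -/
noncomputable def levelTenQuotient (q : ℝ) : ℝ :=
  fneg q * fneg (q ^ 10) / (fneg (q ^ 2) * fneg (q ^ 5))

lemma psiQuotient_neg (q : ℝ) : psiQuotient (-q) = -psiQuotient q := by
  rw [psiQuotient, psiQuotient, neg_sq, Even.neg_pow (by decide), neg_mul, div_neg]

lemma phiQuotient_ne_zero (hq0 : q ≠ 0) (hq : ‖q‖ < 1) : phiQuotient q ≠ 0 :=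
  div_ne_zero (phi_ne_zero hq0 hq)
    (phi_ne_zero (pow_ne_zero 5 hq0) (norm_pow_lt_one hq (by norm_num)))

lemma levelTenQuotient_ne_zero (hq0 : q ≠ 0) (hq : ‖q‖ < 1) : levelTenQuotient q ≠ 0 :=
  div_ne_zero
    (mul_ne_zero (fneg_ne_zero hq0 hq) (fneg_pow_ne_zero hq0 hq (by norm_num)))
    (mul_ne_zero (fneg_pow_ne_zero hq0 hq (by norm_num)) (fneg_pow_ne_zero hq0 hq (by norm_num)))

lemma phiQuotient_psiQuotient_degree_five (hq0 : q ≠ 0) (hq : ‖q‖ < 1) :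
    (1 - phiQuotient (-q) ^ 2) * (phiQuotient q * psiQuotient q - 1) = 4 := by
  have hq5_ne : q ^ 5 ≠ 0 := pow_ne_zero 5 hq0
  have hq5 : ‖q ^ 5‖ < 1 := norm_pow_lt_one hq (by norm_num)
  have hphi := phi_ne_zero hq5_ne hq5
  have hphi_neg := phi_ne_zero (neg_ne_zero.2 hq5_ne) (by rwa [norm_neg])
  have hpsi := psi_ne_zero (pow_ne_zero 10 hq0) (norm_pow_lt_one hq (by norm_num))
  have hrel := phi_psi_degree_five hq0 hq
  rw [psi_sq hq0 hq, psi_sq hq5_ne hq5, ← pow_mul] at hrel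
  rw [phiQuotient, phiQuotient, psiQuotient, Odd.neg_pow (by decide)]
  field_simp
  linear_combination hrel

lemma phiQuotient_neg (hq0 : q ≠ 0) (hq : ‖q‖ < 1) :
    phiQuotient (-q) =
      phiQuotient q * (levelTenQuotient q ^ 2 / levelTenQuotient (q ^ 2)) ^ 2 := by
  have hq5 := norm_pow_lt_one hq (k := 5) (by norm_num)
  rw [phiQuotient, phiQuotient, Odd.neg_pow (by decide), phi_neg_eq_fneg hq0 hq,
    phi_neg_eq_fneg (pow_ne_zero 5 hq0) hq5, phi_eq_fneg hq0 hq,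
    phi_eq_fneg (pow_ne_zero 5 hq0) hq5, levelTenQuotient, levelTenQuotient]
  simp only [← pow_mul, Nat.reduceMul]
  have h₁ := fneg_ne_zero hq0 hq
  have h₂ := fneg_pow_ne_zero hq0 hq two_ne_zero
  have h₄ := fneg_pow_ne_zero hq0 hq four_ne_zero
  have h₅ := fneg_pow_ne_zero hq0 hq (k := 5) (by norm_num)
  have h₁₀ := fneg_pow_ne_zero hq0 hq (k := 10) (by norm_num)
  have h₂₀ := fneg_pow_ne_zero hq0 hq (k := 20) (by norm_num)
  field_simp

lemma psiQuotient_eq_phiQuotient_mul (hq0 : q ≠ 0) (hq : ‖q‖ < 1) :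
    psiQuotient q =
      phiQuotient q * (levelTenQuotient q / levelTenQuotient (q ^ 2) ^ 2) ^ 2 / q := by
  have hq5 := norm_pow_lt_one hq (k := 5) (by norm_num)
  rw [phiQuotient, psiQuotient, psi_eq_fneg (pow_ne_zero 2 hq0) (norm_pow_lt_one hq two_ne_zero),
    psi_eq_fneg (pow_ne_zero 10 hq0) (norm_pow_lt_one hq (by norm_num)), phi_eq_fneg hq0 hq,
    phi_eq_fneg (pow_ne_zero 5 hq0) hq5, levelTenQuotient, levelTenQuotient]
  simp only [← pow_mul, Nat.reduceMul]
  have h₁ := fneg_ne_zero hq0 hq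
  have h₂ := fneg_pow_ne_zero hq0 hq two_ne_zero
  have h₄ := fneg_pow_ne_zero hq0 hq four_ne_zero
  have h₅ := fneg_pow_ne_zero hq0 hq (k := 5) (by norm_num)
  have h₁₀ := fneg_pow_ne_zero hq0 hq (k := 10) (by norm_num)
  have h₂₀ := fneg_pow_ne_zero hq0 hq (k := 20) (by norm_num)
  field_simp

end ModularEquation

section Elimination

variable {K : Type*} [Field K]

lemma cubic_of_degree_five_relations {x z w : K} (hxz : x + z ≠ 0)
    (h₁ : (1 - x ^ 2) * (z * w - 1) = 4) (h₂ : (1 - z ^ 2) * (-(x * w) - 1) = 4) :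
    (x + w) * (x * w + z ^ 2) = z * (x - w) ^ 2 := by
  have hsub : x * z * w = w + x - z := mul_left_cancel₀ hxz (by linear_combination h₂ - h₁)
  have hfive : x * z + z * w - x * w = 5 := by linear_combination h₁ + x * hsub
  linear_combination 5 * hsub - (w + x - z) * hfive

lemma mul_div_relation_of_cubic {x z w c₁ c₂ : K} (hz : z ≠ 0) (h₁ : c₁ ≠ 0) (h₂ : c₂ ≠ 0)
    (hx : x = z * (c₁ ^ 2 / c₂) ^ 2) (hw : w = z * (c₁ / c₂ ^ 2) ^ 2)
    (h : (x + w) * (x * w + z ^ 2) = z * (x - w) ^ 2) :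
    (c₁ * c₂ + 1 / (c₁ * c₂)) * ((c₁ / c₂) ^ 3 + 1 / (c₁ / c₂) ^ 3) + 2 =
      (c₁ * c₂) ^ 2 + 1 / (c₁ * c₂) ^ 2 := by
  subst hx hw
  field_simp at h ⊢
  linear_combination h

end Elimination

lemma phiQuotient_psiQuotient_cubic {q : ℝ} (hq0 : q ≠ 0) (hq : ‖q‖ < 1) :
    (phiQuotient (-q) + psiQuotient q) *
        (phiQuotient (-q) * psiQuotient q + phiQuotient q ^ 2) =
      phiQuotient q * (phiQuotient (-q) - psiQuotient q) ^ 2 := by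
  have hsum : phiQuotient (-q) + phiQuotient q ≠ 0 := by
    have hz := phiQuotient_ne_zero hq0 hq
    rw [phiQuotient_neg hq0 hq, ← mul_add_one]
    positivity
  have hneg := phiQuotient_psiQuotient_degree_five (neg_ne_zero.2 hq0) (by rwa [norm_neg])
  rw [neg_neg, psiQuotient_neg, mul_neg] at hneg
  exact cubic_of_degree_five_relations hsum (phiQuotient_psiQuotient_degree_five hq0 hq) hneg

theorem levelTenQuotient_mul_div_relation {r c₁ c₂ : ℝ} (hr0 : r ≠ 0) (hr : ‖r‖ < 1)
    (h₁ : c₁ = r * levelTenQuotient (r ^ 6)) (h₂ : c₂ = r ^ 2 * levelTenQuotient (r ^ 12)) :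
    (c₁ * c₂ + 1 / (c₁ * c₂)) * ((c₁ / c₂) ^ 3 + 1 / (c₁ / c₂) ^ 3) + 2 =
      (c₁ * c₂) ^ 2 + 1 / (c₁ * c₂) ^ 2 := by
  have hq0 : r ^ 6 ≠ 0 := pow_ne_zero 6 hr0
  have hq : ‖r ^ 6‖ < 1 := norm_pow_lt_one hr (by norm_num)
  have hK₁ := levelTenQuotient_ne_zero hq0 hq
  have hK₂ := levelTenQuotient_ne_zero (pow_ne_zero 12 hr0) (norm_pow_lt_one hr (by norm_num))
  have hx := phiQuotient_neg hq0 hq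
  have hw := psiQuotient_eq_phiQuotient_mul hq0 hq
  rw [← pow_mul] at hx hw
  subst h₁ h₂
  refine mul_div_relation_of_cubic (phiQuotient_ne_zero hq0 hq) (by positivity) (by positivity)
    (hx.trans ?_) (hw.trans ?_) (phiQuotient_psiQuotient_cubic hq0 hq)
  · field_simp
  · field_simp

theorem stmt_8 (q C₁ C₂ P Q : ℝ) (hq0 : 0 < q) (hq1 : q < 1)
    (hC1 : C₁ = q ^ ((1 : ℝ) / 6) * fneg q * fneg (q ^ 10) /
      (fneg (q ^ 2) * fneg (q ^ 5)))
    (hC2 : C₂ = q ^ ((1 : ℝ) / 3) * fneg (q ^ 2) * fneg (q ^ 20) /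
      (fneg (q ^ 4) * fneg (q ^ 10)))
    (hP : P = C₁ * C₂) (hQ : Q = C₁ / C₂) :
    (P + 1 / P) * (Q ^ 3 + 1 / Q ^ 3) + 2 = P ^ 2 + 1 / P ^ 2 := by
  obtain ⟨r, hr0, rfl⟩ : ∃ r : ℝ, 0 < r ∧ r ^ 6 = q :=
    ⟨q ^ ((6 : ℕ) : ℝ)⁻¹, rpow_pos_of_pos hq0 _, rpow_inv_natCast_pow hq0.le (by norm_num)⟩
  have hr1 : r < 1 := (pow_lt_one_iff_of_nonneg hr0.le (by norm_num)).1 hq1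
  have hsixth : (r ^ 6) ^ ((1 : ℝ) / 6) = r := by
    rw [← rpow_natCast, ← rpow_mul hr0.le]
    norm_num
  have hthird : (r ^ 6) ^ ((1 : ℝ) / 3) = r ^ 2 := by
    rw [← rpow_natCast, ← rpow_mul hr0.le]
    norm_num
  simp only [hsixth, hthird, ← pow_mul, Nat.reduceMul] at hC1 hC2
  rw [hP, hQ]
  refine levelTenQuotient_mul_div_relation hr0.ne' (by rwa [Real.norm_of_nonneg hr0.le]) ?_ ?_
  · rw [hC1, levelTenQuotient, ← pow_mul, ← pow_mul, ← pow_mul]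
    ring
  · rw [hC2, levelTenQuotient, ← pow_mul, ← pow_mul, ← pow_mul]
    ring
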